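/- arXiv:1111.2138 — 12 statements merged into one kernel-verified Lean document; each statement's English description precedes it below -/
import Mathlib

section
/- Let T be a nonnegative tensor of order m ≥ 2 and dimension n ≥ 2. Then T is strictly nonnegative if and only if the vector R(T), whose i-th component is Σ_{i_2,…,i_m=1}^n T_{i i_2…i_m}, has all components positive. -/
open Finset

/-- `(T x^{m-1})_i` for an order-`(k+1)` tensor encoded by its first index
and the `k` trailing indices (so for an order-`m` tensor, `k = m - 1`). -/
def tapp {ι : Type*} [Fintype ι] {k : ℕ} (T : ι → (Fin k → ι) → ℝ) (x : ι → ℝ) (i : ι) : ℝ :=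
  ∑ β : Fin k → ι, T i β * ∏ l, x (β l)

/-- All entries of the tensor are nonnegative. -/
def TNonneg {ι : Type*} {k : ℕ} (T : ι → (Fin k → ι) → ℝ) : Prop :=
  ∀ i β, 0 ≤ T i β

/-- `T` is strictly nonnegative: nonnegative, and `T x^{m-1} > 0` whenever `x > 0`. -/
def TStrictlyNonneg {ι : Type*} [Fintype ι] {k : ℕ} (T : ι → (Fin k → ι) → ℝ) : Prop :=
  TNonneg T ∧ ∀ x : ι → ℝ, (∀ i, 0 < x i) → ∀ i, 0 < tapp T x i

/-- Representation matrix `G(T)`: `G(T)_{ij}` is the sum of all `T_{i i₂…i_m}` with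
`j ∈ {i₂,…,i_m}`. -/
def repMat {ι : Type*} [Fintype ι] [DecidableEq ι] {k : ℕ}
    (T : ι → (Fin k → ι) → ℝ) : Matrix ι ι ℝ :=
  fun i j => ∑ β : Fin k → ι, if ∃ l, β l = j then T i β else 0

/-- Majorization matrix `M(T)`: `M(T)_{ij} = T_{i j j … j}`. -/
def majMat {ι : Type*} {k : ℕ} (T : ι → (Fin k → ι) → ℝ) : Matrix ι ι ℝ :=
  fun i j => T i (fun _ => j)

/-- A square matrix is reducible if some nonempty proper index subset `I` satisfies
`A i j = 0` for all `i ∈ I`, `j ∉ I`. -/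
def MatReducible {ι : Type*} [Fintype ι] (A : Matrix ι ι ℝ) : Prop :=
  ∃ I : Finset ι, I.Nonempty ∧ I ≠ Finset.univ ∧ ∀ i ∈ I, ∀ j ∉ I, A i j = 0

def MatIrreducible {ι : Type*} [Fintype ι] (A : Matrix ι ι ℝ) : Prop :=
  ¬ MatReducible A

/-- A square nonnegative matrix is primitive if some positive power is entrywise positive. -/
def MatPrimitive {ι : Type*} [Fintype ι] [DecidableEq ι] (A : Matrix ι ι ℝ) : Prop :=
  ∃ p : ℕ, 0 < p ∧ ∀ i j, 0 < (A ^ p) i j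

/-- `lam ∈ ℂ` is an eigenvalue of `T`:
`(T x^{m-1})_i = lam * x_i^{m-1}` for some nonzero `x ∈ ℂⁿ`. -/
def TIsEig {ι : Type*} [Fintype ι] {k : ℕ} (T : ι → (Fin k → ι) → ℝ) (lam : ℂ) : Prop :=
  ∃ x : ι → ℂ, x ≠ 0 ∧
    ∀ i, (∑ β : Fin k → ι, (T i β : ℂ) * ∏ l, x (β l)) = lam * x i ^ k

/-- Spectral radius: the supremum of moduli of eigenvalues. -/
noncomputable def specRad {ι : Type*} [Fintype ι] {k : ℕ}
    (T : ι → (Fin k → ι) → ℝ) : ℝ :=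
  sSup {r : ℝ | ∃ lam : ℂ, TIsEig T lam ∧ r = ‖lam‖}

/-- Induced tensor `T_I` on a subset `I` of the index set. -/
def inducedT {ι : Type*} {k : ℕ} (T : ι → (Fin k → ι) → ℝ) (I : Finset ι) :
    {i // i ∈ I} → (Fin k → {i // i ∈ I}) → ℝ :=
  fun i β => T i.val (fun l => (β l).val)

/-- The identity tensor: `E_{i₁…i_m} = 1` if all indices coincide, `0` otherwise. -/
def idT (ι : Type*) [DecidableEq ι] (k : ℕ) : ι → (Fin k → ι) → ℝ :=
  fun i β => if ∀ l, β l = i then 1 else 0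

/-- A tensor is reducible if some nonempty proper index subset `I` satisfies
`T_{i₁ i₂ … i_m} = 0` for all `i₁ ∈ I` and `i₂, …, i_m ∉ I`. -/
def TReducible {ι : Type*} [Fintype ι] {k : ℕ} (T : ι → (Fin k → ι) → ℝ) : Prop :=
  ∃ I : Finset ι, I.Nonempty ∧ I ≠ Finset.univ ∧
    ∀ i ∈ I, ∀ β : Fin k → ι, (∀ l, β l ∉ I) → T i β = 0

/-- The map `F_T(x)_i = ((T x^{m-1})_i)^{1/(m-1)}` (here `k = m - 1`). -/
noncomputable def FT {ι : Type*} [Fintype ι] {k : ℕ}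
    (T : ι → (Fin k → ι) → ℝ) (x : ι → ℝ) : ι → ℝ :=
  fun i => (tapp T x i) ^ ((k : ℝ)⁻¹)

/-- A tensor is primitive if some iterate of `F_T` is entrywise positive on every
nonzero nonnegative vector. -/
def TPrimitive {ι : Type*} [Fintype ι] {k : ℕ} (T : ι → (Fin k → ι) → ℝ) : Prop :=
  ∃ p : ℕ, 0 < p ∧ ∀ x : ι → ℝ, (∀ i, 0 ≤ x i) → x ≠ 0 → ∀ i, 0 < (FT T)^[p] x i

/-- `T` is weakly positive: all off-diagonal entries of `M(T)` are positive. -/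
def TWeaklyPositive {ι : Type*} {k : ℕ} (T : ι → (Fin k → ι) → ℝ) : Prop :=
  ∀ i j, i ≠ j → 0 < T i (fun _ => j)

/-- `T` is essentially positive: `T x^{m-1} > 0` for every nonzero `x ≥ 0`. -/
def TEssentiallyPositive {ι : Type*} [Fintype ι] {k : ℕ} (T : ι → (Fin k → ι) → ℝ) : Prop :=
  ∀ x : ι → ℝ, (∀ i, 0 ≤ x i) → x ≠ 0 → ∀ i, 0 < tapp T x i

/-- Hilbert's projective metric between two positive vectors:
`d(u,v) = log (max_i v_i/u_i) - log (min_i v_i/u_i)`. -/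
noncomputable def hilbertD {n : ℕ} (hn : 0 < n) (u v : Fin n → ℝ) : ℝ :=
  Real.log ((Finset.univ : Finset (Fin n)).sup' ⟨⟨0, hn⟩, Finset.mem_univ _⟩
      (fun i => v i / u i)) -
  Real.log ((Finset.univ : Finset (Fin n)).inf' ⟨⟨0, hn⟩, Finset.mem_univ _⟩
      (fun i => v i / u i))

theorem strictly_nonneg_iff_row_sums_positive
    (m n : ℕ) (hm : 2 ≤ m) (hn : 2 ≤ n)
    (T : Fin n → (Fin (m - 1) → Fin n) → ℝ) (hT : TNonneg T) :
    TStrictlyNonneg T ↔ ∀ i, 0 < ∑ β : Fin (m - 1) → Fin n, T i β := by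
  constructor
  · intro h i
    have h1 := h.2 (fun _ => 1) (fun _ => one_pos) i
    simpa [tapp] using h1
  · intro h
    refine ⟨hT, fun x hx i => ?_⟩
    have hp : ∀ β : Fin (m - 1) → Fin n, 0 < ∏ l, x (β l) :=
      fun β => Finset.prod_pos fun l _ => hx (β l)
    obtain ⟨β, hβ, hpos⟩ := Finset.exists_lt_of_sum_lt
      (s := Finset.univ) (f := fun _ : Fin (m - 1) → Fin n => (0 : ℝ)) (g := T i)
      (by simpa using h i)
    exact Finset.sum_pos' (fun γ _ => mul_nonneg (hT i γ) (hp γ).le)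
      ⟨β, hβ, mul_pos hpos (hp β)⟩
end

section
/- Let T be a nonnegative tensor of order m ≥ 2 and dimension n ≥ 2. Then T is strictly nonnegative if and only if for all vectors x, y ∈ ℝ^n with y ≥ 0 componentwise and x_i > y_i for every i, one has (T x^{m-1})_i > (T y^{m-1})_i for every i. -/
open Finset

theorem strictly_nonneg_iff_strictly_increasing
    (m n : ℕ) (hm : 2 ≤ m) (hn : 2 ≤ n)
    (T : Fin n → (Fin (m - 1) → Fin n) → ℝ) (hT : TNonneg T) :
    TStrictlyNonneg T ↔
      ∀ x y : Fin n → ℝ, (∀ i, 0 ≤ y i) → (∀ i, y i < x i) →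
        ∀ i, tapp T y i < tapp T x i := by
  have hprod : ∀ x y : Fin n → ℝ, (∀ i, 0 ≤ y i) → (∀ i, y i < x i) →
      ∀ β : Fin (m - 1) → Fin n, ∏ l, y (β l) < ∏ l, x (β l) := by
    intro x y hy hxy β
    by_cases h : ∃ l, y (β l) = 0
    · obtain ⟨l, hl⟩ := h
      rw [Finset.prod_eq_zero (Finset.mem_univ l) hl]
      exact Finset.prod_pos fun l _ => (hy _).trans_lt (hxy _)
    · push Not at h
      apply Finset.prod_lt_prod_of_nonempty
      · intro l _
        exact lt_of_le_of_ne (hy _) (h l).symm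
      · intro l _
        exact hxy _
      · exact ⟨⟨0, by omega⟩, Finset.mem_univ _⟩
  constructor
  · rintro ⟨_, hpos⟩ x y hy hxy i
    have h1 := hpos (fun _ => 1) (fun _ => one_pos) i
    have h2 : ∃ β, 0 < T i β := by
      by_contra hc
      push Not at hc
      refine absurd h1 (not_lt.mpr ?_)
      unfold tapp
      apply Finset.sum_nonpos
      intro β _
      simpa using hc β
    obtain ⟨β, hβ⟩ := h2
    unfold tapp
    apply Finset.sum_lt_sum
    · intro γ _
      exact mul_le_mul_of_nonneg_left (hprod x y hy hxy γ).le (hT i γ)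
    · exact ⟨β, Finset.mem_univ _, mul_lt_mul_of_pos_left (hprod x y hy hxy β) hβ⟩
  · intro h
    refine ⟨hT, fun x hx i => ?_⟩
    refine lt_of_le_of_lt ?_ (h x (fun _ => 0) (fun _ => le_rfl) hx i)
    unfold tapp
    exact Finset.sum_nonneg fun β _ =>
      mul_nonneg (hT i β) (Finset.prod_nonneg fun _ _ => le_rfl)
end

section
/- Every weakly irreducible nonnegative tensor of order m ≥ 2 and dimension n ≥ 2 is strictly nonnegative. -/
open Finset

theorem weakly_irreducible_is_strictly_nonneg
    (m n : ℕ) (hm : 2 ≤ m) (hn : 2 ≤ n)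
    (T : Fin n → (Fin (m - 1) → Fin n) → ℝ) (hT : TNonneg T)
    (hwi : MatIrreducible (repMat T)) :
    TStrictlyNonneg T := by
  refine ⟨hT, fun x hx i => ?_⟩
  have hp : ∀ β : Fin (m - 1) → Fin n, 0 < ∏ l, x (β l) :=
    fun β => Finset.prod_pos (fun l _ => hx _)
  have hnn : ∀ β ∈ (Finset.univ : Finset (Fin (m - 1) → Fin n)),
      0 ≤ T i β * ∏ l, x (β l) :=
    fun β _ => mul_nonneg (hT i β) (hp β).le
  by_contra hneg
  have h0 : tapp T x i = 0 := le_antisymm (not_lt.mp hneg) (Finset.sum_nonneg hnn)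
  have hz : ∀ β, T i β = 0 := by
    intro β
    have h1 := (Finset.sum_eq_zero_iff_of_nonneg hnn).mp h0 β (Finset.mem_univ β)
    exact (mul_eq_zero.mp h1).resolve_right (hp β).ne'
  apply hwi
  refine ⟨{i}, Finset.singleton_nonempty i, ?_, ?_⟩
  · intro h
    have h2 := congrArg Finset.card h
    simp at h2
    omega
  · intro a ha j _
    rw [Finset.mem_singleton] at ha
    subst ha
    simp [repMat, hz]
end

section
/- Let T be a nonnegative tensor of order m ≥ 2 and dimension n ≥ 2, and let I be a nonempty subset of {1,…,n}. Then ρ(T_I) ≤ ρ(T). -/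
open Finset

section aux
variable {ι : Type*} [Fintype ι] {k : ℕ}

lemma tapp_smul (T : ι → (Fin k → ι) → ℝ) (c : ℝ) (x : ι → ℝ) (i : ι) :
    tapp T (fun j => c * x j) i = c ^ k * tapp T x i := by
  unfold tapp
  rw [Finset.mul_sum]
  refine Finset.sum_congr rfl fun β _ => ?_
  rw [Finset.prod_mul_distrib]
  simp
  ring

lemma tapp_nonneg (T : ι → (Fin k → ι) → ℝ) (hT : TNonneg T) (x : ι → ℝ)
    (hx : ∀ i, 0 ≤ x i) (i : ι) : 0 ≤ tapp T x i :=
  Finset.sum_nonneg fun β _ => mul_nonneg (hT i β) (Finset.prod_nonneg fun l _ => hx _)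

lemma tapp_mono_left (T S : ι → (Fin k → ι) → ℝ) (h : ∀ i β, T i β ≤ S i β) (x : ι → ℝ)
    (hx : ∀ i, 0 ≤ x i) (i : ι) : tapp T x i ≤ tapp S x i :=
  Finset.sum_le_sum fun β _ =>
    mul_le_mul_of_nonneg_right (h i β) (Finset.prod_nonneg fun l _ => hx _)

lemma tapp_strict (hk : k ≠ 0) (T : ι → (Fin k → ι) → ℝ) (hT : ∀ i β, 0 < T i β) (u v : ι → ℝ)
    (hv : ∀ i, 0 ≤ v i) (huv : ∀ i, v i ≤ u i) (hne : ∃ j, v j < u j) (i : ι) :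
    tapp T v i < tapp T u i := by
  obtain ⟨j, hj⟩ := hne
  refine Finset.sum_lt_sum (fun β _ => ?_) ⟨fun _ => j, Finset.mem_univ _, ?_⟩
  · exact mul_le_mul_of_nonneg_left
      (Finset.prod_le_prod (fun l _ => hv _) (fun l _ => huv _)) (hT i β).le
  · refine mul_lt_mul_of_pos_left ?_ (hT i _)
    simpa using pow_lt_pow_left₀ hj (hv j) hk

lemma sub_bound (T : ι → (Fin k → ι) → ℝ) (hT : TNonneg T) (x : ι → ℝ)
    (hx : ∀ i, 0 ≤ x i) (hne : x ≠ 0) (r : ℝ) (h : ∀ i, r * x i ^ k ≤ tapp T x i) :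
    r ≤ ∑ i, ∑ β, T i β := by
  obtain ⟨j, hj⟩ := Function.ne_iff.1 hne
  obtain ⟨i, -, hi⟩ := Finset.exists_max_image Finset.univ x ⟨j, Finset.mem_univ _⟩
  have hpos : 0 < x i := lt_of_lt_of_le (lt_of_le_of_ne (hx j) (Ne.symm hj)) (hi j (Finset.mem_univ _))
  have h1 : tapp T x i ≤ (∑ β, T i β) * x i ^ k := by
    unfold tapp
    rw [Finset.sum_mul]
    refine Finset.sum_le_sum fun β _ => mul_le_mul_of_nonneg_left ?_ (hT i β)
    calc ∏ l, x (β l) ≤ ∏ _l : Fin k, x i :=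
          Finset.prod_le_prod (fun l _ => hx _) (fun l _ => hi _ (Finset.mem_univ _))
      _ = x i ^ k := by simp
  have h2 : r ≤ ∑ β, T i β := le_of_mul_le_mul_right ((h i).trans h1) (pow_pos hpos k)
  exact h2.trans (Finset.single_le_sum (f := fun i => ∑ β, T i β)
    (fun i _ => Finset.sum_nonneg fun β _ => hT i β) (Finset.mem_univ i))

lemma normalize_sub (T : ι → (Fin k → ι) → ℝ) (x : ι → ℝ)
    (hx : ∀ i, 0 ≤ x i) (hne : x ≠ 0) (r : ℝ) (h : ∀ i, r * x i ^ k ≤ tapp T x i) :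
    ∃ y ∈ stdSimplex ℝ ι, ∀ i, r * y i ^ k ≤ tapp T y i := by
  obtain ⟨j, hj⟩ := Function.ne_iff.1 hne
  have hs : 0 < ∑ i, x i := Finset.sum_pos' (fun i _ => hx i)
    ⟨j, Finset.mem_univ _, lt_of_le_of_ne (hx j) (Ne.symm hj)⟩
  have hc : 0 < (∑ i, x i)⁻¹ := inv_pos.2 hs
  refine ⟨fun j => (∑ i, x i)⁻¹ * x j, ⟨fun i => mul_nonneg hc.le (hx i), ?_⟩, fun i => ?_⟩
  · rw [← Finset.mul_sum]
    exact inv_mul_cancel₀ hs.ne'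
  · rw [tapp_smul, mul_pow]
    have := mul_le_mul_of_nonneg_left (h i) (pow_pos hc k).le
    linarith

lemma simplex_ne {x : ι → ℝ} (hx : x ∈ stdSimplex ℝ ι) : x ≠ 0 := by
  rintro rfl
  simpa using hx.2

lemma pos_eig (hk : k ≠ 0) (T : ι → (Fin k → ι) → ℝ) (hT : ∀ i β, 0 < T i β) (y : ι → ℝ)
    (hy : ∀ i, 0 ≤ y i) (hne : y ≠ 0) (r : ℝ) (hr : 0 ≤ r)
    (h : ∀ i, r * y i ^ k ≤ tapp T y i) :
    ∃ x ∈ stdSimplex ℝ ι, ∃ s, r ≤ s ∧ ∀ i, tapp T x i = s * x i ^ k := by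
  classical
  have hT0 : TNonneg T := fun i β => (hT i β).le
  set R := ∑ i, ∑ β, T i β with hR
  let K : Set ((ι → ℝ) × ℝ) := (stdSimplex ℝ ι ×ˢ Set.Icc r R) ∩
    {p | ∀ i, p.2 * p.1 i ^ k ≤ tapp T p.1 i}
  have hK : IsCompact K := by
    refine ((isCompact_stdSimplex ℝ ι).prod isCompact_Icc).inter_right ?_
    simp only [Set.ofPred_forall]
    refine isClosed_iInter fun i => isClosed_le (by fun_prop) (by unfold tapp; fun_prop)
  have hmem : ∀ (z : ι → ℝ) (t : ℝ), (∀ i, 0 ≤ z i) → z ≠ 0 → r ≤ t →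
      (∀ i, t * z i ^ k ≤ tapp T z i) → ∃ w, (w, t) ∈ K := by
    intro z t hz hzn ht hzt
    obtain ⟨w, hw, hw2⟩ := normalize_sub T z hz hzn t hzt
    exact ⟨w, ⟨hw, ht, sub_bound T hT0 w hw.1 (simplex_ne hw) t hw2⟩, hw2⟩
  obtain ⟨w, hw⟩ := hmem y r hy hne le_rfl h
  obtain ⟨⟨x, s⟩, ⟨⟨hxs, hrs, -⟩, hxs2⟩, hmax⟩ :=
    hK.exists_isMaxOn ⟨_, hw⟩ (f := Prod.snd) continuous_snd.continuousOn
  simp only at hxs hrs hxs2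
  simp only [Set.mem_ofPred_eq] at hxs2
  refine ⟨x, hxs, s, hrs, ?_⟩
  by_contra hcon
  push Not at hcon
  obtain ⟨j, hj⟩ := hcon
  have hs : 0 ≤ s := hr.trans hrs
  set c := s ^ ((k : ℝ)⁻¹) with hc
  have hc0 : 0 ≤ c := Real.rpow_nonneg hs _
  have hck : c ^ k = s := Real.rpow_inv_natCast_pow hs hk
  have hFk : ∀ i, FT T x i ^ k = tapp T x i := fun i =>
    Real.rpow_inv_natCast_pow (tapp_nonneg T hT0 x hxs.1 i) hk
  have hF0 : ∀ i, 0 ≤ FT T x i := fun i => Real.rpow_nonneg (tapp_nonneg T hT0 x hxs.1 i) _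
  have hst := tapp_strict hk T hT (FT T x) (fun i => c * x i)
    (fun i => mul_nonneg hc0 (hxs.1 i))
    (fun i => by
      refine le_of_pow_le_pow_left₀ hk (hF0 i) ?_
      rw [mul_pow, hck, hFk]; exact hxs2 i)
    ⟨j, by
      refine lt_of_pow_lt_pow_left₀ k (hF0 j) ?_
      rw [mul_pow, hck, hFk]; exact lt_of_le_of_ne (hxs2 j) (Ne.symm hj)⟩
  have hst2 : ∀ i, s * FT T x i ^ k < tapp T (FT T x) i := by
    intro i
    have := hst i
    rwa [tapp_smul, hck, ← hFk] at this
  have hFne : FT T x ≠ 0 := by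
    intro h0
    have h1 := hst2 j
    have h2 : tapp T (FT T x) j = 0 := by
      rw [h0]; unfold tapp
      simp [hk]
    rw [h2] at h1
    exact absurd h1 (not_lt.2 (mul_nonneg hs (pow_nonneg (hF0 j) k)))
  have hev : ∀ᶠ t in nhdsWithin s (Set.Ioi s), ∀ i, t * FT T x i ^ k < tapp T (FT T x) i := by
    refine nhdsWithin_le_nhds ?_
    refine Filter.eventually_all.2 fun i => ?_
    exact (by fun_prop : Continuous fun t : ℝ => t * FT T x i ^ k).continuousAt.eventually_lt
      continuousAt_const (hst2 i)
  obtain ⟨t, ht, hts⟩ := (hev.and self_mem_nhdsWithin).exists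
  have hts' : s < t := hts
  obtain ⟨w, hw⟩ := hmem (FT T x) t hF0 hFne (hrs.trans hts'.le) (fun i => (ht i).le)
  have := hmax hw
  simp only [Set.mem_ofPred_eq] at this
  linarith

lemma nonneg_eig (hk : k ≠ 0) (T : ι → (Fin k → ι) → ℝ) (hT : TNonneg T) (y : ι → ℝ)
    (hy : ∀ i, 0 ≤ y i) (hne : y ≠ 0) (r : ℝ) (hr : 0 ≤ r)
    (h : ∀ i, r * y i ^ k ≤ tapp T y i) :
    ∃ x ∈ stdSimplex ℝ ι, ∃ s, r ≤ s ∧ ∀ i, tapp T x i = s * x i ^ k := by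
  let P : ℝ → ι → (Fin k → ι) → ℝ := fun e i β => T i β + e
  set R := ∑ i, ∑ β, P 1 i β with hR
  let K : Set (ℝ × (ι → ℝ) × ℝ) := (Set.Icc 0 1 ×ˢ stdSimplex ℝ ι ×ˢ Set.Icc r R) ∩
    {p | ∀ i, tapp (P p.1) p.2.1 i = p.2.2 * p.2.1 i ^ k}
  have hK : IsCompact K := by
    refine (isCompact_Icc.prod ((isCompact_stdSimplex ℝ ι).prod isCompact_Icc)).inter_right ?_
    simp only [Set.ofPred_forall]
    refine isClosed_iInter fun i => isClosed_eq (by unfold tapp; fun_prop) (by fun_prop)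
  have hcl : IsClosed (Prod.fst '' K) := (hK.image continuous_fst).isClosed
  have hsub : Set.Ioc (0 : ℝ) 1 ⊆ Prod.fst '' K := by
    intro e he
    obtain ⟨x, hx, s, hs, hxs⟩ := pos_eig hk (P e)
      (fun i β => add_pos_of_nonneg_of_pos (hT i β) he.1) y hy hne r hr
      (fun i => (h i).trans (tapp_mono_left _ _ (fun i β => by
        simpa [P] using he.1.le) y hy i))
    refine ⟨(e, x, s), ⟨⟨⟨he.1.le, he.2⟩, hx, hs, ?_⟩, hxs⟩, rfl⟩
    refine sub_bound (P 1) (fun i β => add_nonneg (hT i β) zero_le_one) x hx.1 (simplex_ne hx) s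
      fun i => ?_
    rw [← hxs i]
    exact tapp_mono_left _ _ (fun i β => by simpa [P] using he.2) x hx.1 i
  have h0 : (0 : ℝ) ∈ Prod.fst '' K := by
    refine hcl.closure_subset_iff.2 hsub ?_
    rw [closure_Ioc (by norm_num)]
    simp
  obtain ⟨⟨e, x, s⟩, ⟨⟨-, hx, hs, -⟩, hxs⟩, he⟩ := h0
  simp only at he
  subst he
  refine ⟨x, hx, s, hs, fun i => ?_⟩
  have := hxs i
  simpa [P] using this

lemma eig_sub (T : ι → (Fin k → ι) → ℝ) (hT : TNonneg T) (lam : ℂ) (x : ι → ℂ)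
    (h : ∀ i, (∑ β : Fin k → ι, (T i β : ℂ) * ∏ l, x (β l)) = lam * x i ^ k) (i : ι) :
    ‖lam‖ * ‖x i‖ ^ k ≤ tapp T (fun j => ‖x j‖) i := by
  rw [← norm_pow, ← norm_mul, ← h i]
  refine (norm_sum_le _ _).trans (le_of_eq ?_)
  unfold tapp
  refine Finset.sum_congr rfl fun β _ => ?_
  rw [norm_mul, norm_prod, Complex.norm_real, Real.norm_of_nonneg (hT i β)]

lemma norm_ne {x : ι → ℂ} (hx : x ≠ 0) : (fun j => ‖x j‖) ≠ 0 := by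
  intro h
  exact hx (funext fun j => norm_eq_zero.1 (congrFun h j))

lemma tapp_induced (T : ι → (Fin k → ι) → ℝ) (hT : TNonneg T) (I : Finset ι) (y : ι → ℝ)
    (hy : ∀ i, 0 ≤ y i) (i : {i // i ∈ I}) :
    tapp (inducedT T I) (fun j => y j.val) i ≤ tapp T y i.val := by
  classical
  unfold tapp inducedT
  let f : (Fin k → {i // i ∈ I}) ↪ (Fin k → ι) :=
    ⟨fun β l => (β l).val, fun a b hab => funext fun l => Subtype.ext (congrFun hab l)⟩
  have := Finset.sum_map Finset.univ f (fun β => T i.val β * ∏ l, y (β l))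
  refine (le_of_eq this.symm).trans ?_
  exact Finset.sum_le_sum_of_subset_of_nonneg (Finset.subset_univ _)
    fun β _ _ => mul_nonneg (hT _ β) (Finset.prod_nonneg fun l _ => hy _)

end aux

theorem specRad_induced_le
    (m n : ℕ) (hm : 2 ≤ m) (hn : 2 ≤ n)
    (T : Fin n → (Fin (m - 1) → Fin n) → ℝ) (hT : TNonneg T)
    (I : Finset (Fin n)) (hI : I.Nonempty) :
    specRad (inducedT T I) ≤ specRad T := by
  have hk : m - 1 ≠ 0 := by omega
  have hbdd : BddAbove {r : ℝ | ∃ lam : ℂ, TIsEig T lam ∧ r = ‖lam‖} := by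
    refine ⟨∑ i, ∑ β, T i β, ?_⟩
    rintro _ ⟨lam, ⟨x, hx, hxl⟩, rfl⟩
    exact sub_bound T hT _ (fun i => norm_nonneg _) (norm_ne hx) _ (eig_sub T hT lam x hxl)
  refine Real.sSup_le ?_ (Real.sSup_nonneg ?_)
  swap
  · rintro _ ⟨lam, -, rfl⟩
    exact norm_nonneg _
  rintro _ ⟨lam, ⟨z, hz, hzl⟩, rfl⟩
  have hI0 : TNonneg (inducedT T I) := fun i β => hT _ _
  have hsub := eig_sub _ hI0 lam z hzl
  let y : Fin n → ℝ := fun i => if hi : i ∈ I then ‖z ⟨i, hi⟩‖ else 0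
  have hy0 : ∀ i, 0 ≤ y i := by
    intro i
    simp only [y]
    split_ifs
    · exact norm_nonneg _
    · exact le_rfl
  have hyI : (fun j : {i // i ∈ I} => y j.val) = fun j => ‖z j‖ := by
    funext j
    simp [y]
  have hyne : y ≠ 0 := by
    intro h0
    refine norm_ne hz ?_
    rw [← hyI, h0]
    rfl
  obtain ⟨x, hx, s, hs, hxs⟩ := nonneg_eig hk T hT y hy0 hyne ‖lam‖ (norm_nonneg _) (by
    intro i
    by_cases hi : i ∈ I
    · have h1 := tapp_induced T hT I y hy0 ⟨i, hi⟩
      rw [hyI] at h1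
      have h2 := (hsub ⟨i, hi⟩).trans h1
      simpa [y, hi] using h2
    · have : y i = 0 := by simp [y, hi]
      rw [this, zero_pow hk, mul_zero]
      exact tapp_nonneg T hT y hy0 i)
  have hs0 : 0 ≤ s := (norm_nonneg _).trans hs
  refine hs.trans (le_csSup hbdd ⟨(s : ℂ), ⟨fun i => (x i : ℂ), ?_, fun i => ?_⟩, ?_⟩)
  · intro h0
    refine simplex_ne hx (funext fun i => ?_)
    have := congrFun h0 i
    simpa using this
  · have := hxs i
    unfold tapp at this
    beta_reduce
    exact_mod_cast this
  · rw [Complex.norm_real, Real.norm_of_nonneg hs0]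
end

section
/- If T is a strictly nonnegative tensor of order m ≥ 2 and dimension n ≥ 2, then its spectral radius ρ(T) is positive. -/
open Finset

section helpers

variable {n k : ℕ}

lemma tapp_exp_le (T : Fin n → (Fin k → Fin n) → ℝ) (h0 : TNonneg T) (u v : Fin n → ℝ) (d : ℝ)
    (h : ∀ j, u j ≤ v j + d) (i : Fin n) :
    tapp T (fun j => Real.exp (u j)) i ≤ Real.exp (k * d) * tapp T (fun j => Real.exp (v j)) i := by
  unfold tapp
  rw [Finset.mul_sum]
  refine Finset.sum_le_sum fun β _ => ?_
  rw [mul_left_comm]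
  refine mul_le_mul_of_nonneg_left ?_ (h0 i β)
  rw [← Real.exp_sum, ← Real.exp_sum, ← Real.exp_add]
  refine Real.exp_le_exp.2 ?_
  calc ∑ l, u (β l) ≤ ∑ l : Fin k, (v (β l) + d) := Finset.sum_le_sum fun l _ => h _
    _ = _ := by rw [Finset.sum_add_distrib]; simp; ring

lemma tapp_exp_shift (T : Fin n → (Fin k → Fin n) → ℝ) (u : Fin n → ℝ) (c : ℝ) (i : Fin n) :
    tapp T (fun j => Real.exp (u j - c)) i
      = Real.exp (-(k * c)) * tapp T (fun j => Real.exp (u j)) i := by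
  unfold tapp
  rw [Finset.mul_sum]
  refine Finset.sum_congr rfl fun β _ => ?_
  rw [mul_left_comm, ← Real.exp_sum, ← Real.exp_sum, ← Real.exp_add]
  congr 2
  rw [Finset.sum_sub_distrib]; simp; ring

/-- logarithmic form of the tensor map -/
noncomputable def lg (T : Fin n → (Fin k → Fin n) → ℝ) (u : Fin n → ℝ) : Fin n → ℝ :=
  fun i => Real.log (tapp T (fun j => Real.exp (u j)) i)

lemma lg_le (T : Fin n → (Fin k → Fin n) → ℝ) (hT : TStrictlyNonneg T) (u v : Fin n → ℝ)
    (i : Fin n) : lg T u i - lg T v i ≤ k * ‖u - v‖ := by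
  have hu := hT.2 (fun j => Real.exp (u j)) (fun j => Real.exp_pos _) i
  have hv := hT.2 (fun j => Real.exp (v j)) (fun j => Real.exp_pos _) i
  have := tapp_exp_le T hT.1 u v ‖u - v‖ (fun j => by
    have h1 := norm_le_pi_norm (u - v) j
    have h2 := le_abs_self ((u - v) j)
    rw [Real.norm_eq_abs] at h1
    simp only [Pi.sub_apply] at h1 h2
    linarith) i
  have h3 := Real.log_le_log hu this
  rw [Real.log_mul (Real.exp_pos _).ne' hv.ne', Real.log_exp] at h3
  unfold lg
  linarith

lemma lg_lip (T : Fin n → (Fin k → Fin n) → ℝ) (hT : TStrictlyNonneg T) (u v : Fin n → ℝ) :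
    ‖lg T u - lg T v‖ ≤ k * ‖u - v‖ := by
  refine (pi_norm_le_iff_of_nonneg (by positivity)).2 fun i => ?_
  rw [Real.norm_eq_abs, abs_le, Pi.sub_apply]
  have h1 := lg_le T hT u v i
  have h2 := lg_le T hT v u i
  rw [norm_sub_rev] at h2
  constructor <;> linarith

lemma exists_disc (T : Fin n → (Fin k → Fin n) → ℝ) (hT : TStrictlyNonneg T) (hk : 0 < k)
    (a : ℝ) (ha0 : 0 ≤ a) (ha1 : a < 1) : ∃ u : Fin n → ℝ, ∀ i, k * u i = a * lg T u i := by
  have hk' : (0 : ℝ) < k := by exact_mod_cast hk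
  have hc : ContractingWith ⟨a, ha0⟩ (fun u : Fin n → ℝ => (a / k) • lg T u) := by
    refine ⟨by exact_mod_cast ha1, LipschitzWith.of_dist_le_mul fun u v => ?_⟩
    rw [dist_eq_norm, dist_eq_norm, ← smul_sub, norm_smul, Real.norm_of_nonneg (by positivity)]
    calc a / k * ‖lg T u - lg T v‖ ≤ a / k * (k * ‖u - v‖) :=
          mul_le_mul_of_nonneg_left (lg_lip T hT u v) (by positivity)
      _ = a * ‖u - v‖ := by field_simp
  refine ⟨hc.fixedPoint, fun i => ?_⟩
  have h := congrFun hc.fixedPoint_isFixedPt i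
  simp only [Pi.smul_apply, smul_eq_mul] at h
  generalize ContractingWith.fixedPoint _ hc = u at h ⊢
  rw [← h]
  field_simp

lemma disc_norm (T : Fin n → (Fin k → Fin n) → ℝ) (hT : TStrictlyNonneg T)
    (a : ℝ) (ha0 : 0 ≤ a) (ha1 : a < 1) (u : Fin n → ℝ) (hu : ∀ i, k * u i = a * lg T u i) :
    (1 - a) * k * ‖u‖ ≤ ‖lg T 0‖ := by
  have h1 : (k : ℝ) • u = a • lg T u := by ext i; simpa using hu i
  have h2 : k * ‖u‖ = a * ‖lg T u‖ := by
    have := congrArg norm h1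
    rwa [norm_smul, norm_smul, Real.norm_of_nonneg ha0, Real.norm_of_nonneg (by positivity)] at this
  have h3 : ‖lg T u‖ ≤ k * ‖u‖ + ‖lg T 0‖ := by
    have h4 := lg_lip T hT u 0
    have h5 := norm_le_norm_sub_add (lg T u) (lg T 0)
    rw [sub_zero] at h4
    linarith
  have h6 := mul_le_mul_of_nonneg_left h3 ha0
  have h7 := mul_le_of_le_one_left (norm_nonneg (lg T 0)) ha1.le
  nlinarith

lemma exists_normalized (T : Fin n → (Fin k → Fin n) → ℝ) (hT : TStrictlyNonneg T) (hk : 0 < k)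
    (hn : 0 < n) (a : ℝ) (ha0 : 0 ≤ a) (ha1 : a < 1) :
    ∃ p : ℝ × (Fin n → ℝ), p ∈ Set.Icc (Real.exp (-‖lg T 0‖)) (Real.exp ‖lg T 0‖) ×ˢ
      Metric.sphere (0 : Fin n → ℝ) 1 ∧ (∀ i, 0 ≤ p.2 i) ∧
      ∀ i, p.1 * p.2 i ^ k = (tapp T p.2 i) ^ a := by
  obtain ⟨u, hu⟩ := exists_disc T hT hk a ha0 ha1
  have hb := disc_norm T hT a ha0 ha1 u hu
  haveI : Nonempty (Fin n) := ⟨⟨0, hn⟩⟩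
  obtain ⟨i0, hi0⟩ := Finite.exists_max u
  have hc : |(1 - a) * k * u i0| ≤ ‖lg T 0‖ := by
    have hpos : 0 ≤ (1 - a) * k := mul_nonneg (by linarith) (by positivity)
    rw [abs_mul, abs_of_nonneg hpos]
    exact (mul_le_mul_of_nonneg_left (norm_le_pi_norm u i0) hpos).trans hb
  rw [abs_le] at hc
  refine ⟨(Real.exp ((1 - a) * k * u i0), fun j => Real.exp (u j - u i0)), ⟨⟨?_, ?_⟩, ?_⟩, ?_, ?_⟩
  · exact Real.exp_le_exp.2 hc.1
  · exact Real.exp_le_exp.2 hc.2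
  · rw [mem_sphere_zero_iff_norm]
    apply le_antisymm
    · refine (pi_norm_le_iff_of_nonneg zero_le_one).2 fun j => ?_
      rw [Real.norm_of_nonneg (Real.exp_pos _).le, Real.exp_le_one_iff]
      linarith [hi0 j]
    · have := norm_le_pi_norm (fun j => Real.exp (u j - u i0)) i0
      simpa using this
  · exact fun i => (Real.exp_pos _).le
  · intro i
    have hp := hT.2 (fun j => Real.exp (u j)) (fun j => Real.exp_pos _) i
    dsimp only
    rw [tapp_exp_shift, ← Real.exp_log hp, ← Real.exp_add, ← Real.exp_mul, ← Real.exp_nat_mul,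
      ← Real.exp_add]
    congr 1
    have := hu i
    unfold lg at this
    linear_combination this

lemma tapp_continuous (T : Fin n → (Fin k → Fin n) → ℝ) (i : Fin n) :
    Continuous (fun x => tapp T x i) := by
  unfold tapp
  fun_prop

lemma exists_eig (T : Fin n → (Fin k → Fin n) → ℝ) (hT : TStrictlyNonneg T) (hk : 0 < k)
    (hn : 0 < n) : ∃ (μ : ℝ) (y : Fin n → ℝ), 0 < μ ∧ y ≠ 0 ∧ ∀ i, tapp T y i = μ * y i ^ k := by
  have ha : ∀ N : ℕ, (0 : ℝ) ≤ 1 - 1 / ((N : ℝ) + 1) ∧ 1 - 1 / ((N : ℝ) + 1) < 1 := fun N => by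
    have h1 : (0 : ℝ) < 1 / ((N : ℝ) + 1) := by positivity
    have h2 : 1 / ((N : ℝ) + 1) ≤ 1 := by
      rw [div_le_one (by positivity)]; linarith [Nat.cast_nonneg (α := ℝ) N]
    constructor <;> linarith
  choose p hpK hp0 hpe using fun N : ℕ => exists_normalized T hT hk hn _ (ha N).1 (ha N).2
  obtain ⟨q, hq, φ, hφ, hlim⟩ := (isCompact_Icc.prod (isCompact_sphere (0 : Fin n → ℝ) 1)).tendsto_subseq hpK
  have hl1 : Filter.Tendsto (fun N => (p (φ N)).1) Filter.atTop (nhds q.1) :=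
    (continuous_fst.tendsto q).comp hlim
  have hl2 : Filter.Tendsto (fun N => (p (φ N)).2) Filter.atTop (nhds q.2) :=
    (continuous_snd.tendsto q).comp hlim
  have hla : Filter.Tendsto (fun N => 1 - 1 / (((φ N : ℕ) : ℝ) + 1)) Filter.atTop (nhds (1 : ℝ)) := by
    have h := (tendsto_one_div_add_atTop_nhds_zero_nat (𝕜 := ℝ)).const_sub 1
    rw [sub_zero] at h
    exact h.comp hφ.tendsto_atTop
  refine ⟨q.1, q.2, (Real.exp_pos _).trans_le hq.1.1, ?_, fun i => ?_⟩
  · intro h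
    have := mem_sphere_zero_iff_norm.1 hq.2
    rw [h, norm_zero] at this
    exact zero_ne_one this
  · have hli := (tendsto_pi_nhds.1 hl2) i
    have hA := hl1.mul (hli.pow k)
    have hB := (((tapp_continuous T i).tendsto q.2).comp hl2).rpow hla (Or.inr one_pos)
    rw [Real.rpow_one] at hB
    refine tendsto_nhds_unique hB (hA.congr fun N => ?_)
    exact hpe (φ N) i

lemma eig_bound (T : Fin n → (Fin k → Fin n) → ℝ) (h0 : TNonneg T) (hn : 0 < n) (lam : ℂ)
    (h : TIsEig T lam) : ‖lam‖ ≤ ∑ i, ∑ β, T i β := by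
  obtain ⟨x, hx, he⟩ := h
  haveI : Nonempty (Fin n) := ⟨⟨0, hn⟩⟩
  obtain ⟨i, hi⟩ := Finite.exists_max (fun j => ‖x j‖)
  have hpos : 0 < ‖x i‖ := by
    obtain ⟨j, hj⟩ := Function.ne_iff.1 hx
    exact (norm_pos_iff.2 hj).trans_le (hi j)
  have h1 : ‖lam‖ * ‖x i‖ ^ k ≤ (∑ β, T i β) * ‖x i‖ ^ k := by
    rw [← norm_pow, ← norm_mul, ← he i, Finset.sum_mul]
    refine (norm_sum_le _ _).trans (Finset.sum_le_sum fun β _ => ?_)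
    rw [norm_mul, Complex.norm_real, Real.norm_of_nonneg (h0 i β), norm_prod, norm_pow]
    refine mul_le_mul_of_nonneg_left ?_ (h0 i β)
    calc ∏ l, ‖x (β l)‖ ≤ ∏ _l : Fin k, ‖x i‖ :=
          Finset.prod_le_prod (fun _ _ => norm_nonneg _) fun l _ => hi _
      _ = _ := by simp
  exact (le_of_mul_le_mul_right h1 (pow_pos hpos k)).trans
    (Finset.single_le_sum (f := fun i => ∑ β, T i β)
      (fun j _ => Finset.sum_nonneg fun β _ => h0 j β) (Finset.mem_univ i))

end helpers

theorem strictly_nonneg_specRad_pos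
    (m n : ℕ) (hm : 2 ≤ m) (hn : 2 ≤ n)
    (T : Fin n → (Fin (m - 1) → Fin n) → ℝ)
    (hT : TStrictlyNonneg T) :
    0 < specRad T := by
  obtain ⟨μ, y, hμ, hy, he⟩ := exists_eig T hT (by omega) (by omega)
  refine hμ.trans_le (le_csSup ⟨∑ i, ∑ β, T i β, ?_⟩ ⟨(μ : ℂ), ⟨fun i => (y i : ℂ), ?_, ?_⟩, ?_⟩)
  · rintro r ⟨lam, hl, rfl⟩
    exact eig_bound T hT.1 (by omega) lam hl
  · intro h
    exact hy (funext fun i => by simpa using congrFun h i)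
  · intro i
    have := congrArg (fun r : ℝ => (r : ℂ)) (he i)
    simpa [tapp] using this
  · rw [Complex.norm_real, Real.norm_of_nonneg hμ.le]
end

section
/- Let T be a nonnegative tensor of order m ≥ 2 and dimension n ≥ 2 and let E be the identity tensor of the same order and dimension. Then T is irreducible if and only if T + E is primitive. -/
open Finset

lemma FT_nonneg_aux {ι : Type*} [Fintype ι] {k : ℕ} {S : ι → (Fin k → ι) → ℝ}
    (hS : TNonneg S) {x : ι → ℝ} (hx : ∀ i, 0 ≤ x i) (i : ι) : 0 ≤ FT S x i :=
  Real.rpow_nonneg (Finset.sum_nonneg fun β _ =>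
    mul_nonneg (hS i β) (Finset.prod_nonneg fun l _ => hx _)) _

lemma FT_pos_iff_aux {ι : Type*} [Fintype ι] {k : ℕ} (hk : k ≠ 0) {S : ι → (Fin k → ι) → ℝ}
    (hS : TNonneg S) {x : ι → ℝ} (hx : ∀ i, 0 ≤ x i) (i : ι) :
    0 < FT S x i ↔ ∃ β, 0 < S i β ∧ ∀ l, 0 < x (β l) := by
  have hterm : ∀ β ∈ (Finset.univ : Finset (Fin k → ι)), 0 ≤ S i β * ∏ l, x (β l) := fun β _ =>
    mul_nonneg (hS i β) (Finset.prod_nonneg fun l _ => hx _)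
  constructor
  · intro h
    by_contra! hc
    have h0 : tapp S x i = 0 := by
      refine Finset.sum_eq_zero fun β _ => ?_
      by_cases hb : 0 < S i β
      · obtain ⟨l, hl⟩ := hc β hb
        rw [Finset.prod_eq_zero (Finset.mem_univ l) (le_antisymm hl (hx _)), mul_zero]
      · rw [le_antisymm (not_lt.1 hb) (hS i β), zero_mul]
    have hk' : ((k : ℝ)⁻¹) ≠ 0 := inv_ne_zero (by exact_mod_cast hk)
    simp only [FT, h0, Real.zero_rpow hk', lt_irrefl] at h
  · rintro ⟨β, hb, hl⟩
    refine Real.rpow_pos_of_pos ?_ _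
    exact Finset.sum_pos' hterm ⟨β, Finset.mem_univ _,
      mul_pos hb (Finset.prod_pos fun l _ => hl l)⟩

theorem irreducible_iff_add_id_primitive
    (m n : ℕ) (hm : 2 ≤ m) (hn : 2 ≤ n)
    (T : Fin n → (Fin (m - 1) → Fin n) → ℝ) (hT : TNonneg T) :
    ¬ TReducible T ↔
      TPrimitive (fun i β => T i β + idT (Fin n) (m - 1) i β) := by
  have hk : m - 1 ≠ 0 := by omega
  have hE : ∀ i β, 0 ≤ idT (Fin n) (m - 1) i β := by
    intro i β
    unfold idT
    split_ifs <;> norm_num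
  set S : Fin n → (Fin (m - 1) → Fin n) → ℝ :=
    fun i β => T i β + idT (Fin n) (m - 1) i β with hSdef
  have hS : TNonneg S := fun i β => add_nonneg (hT i β) (hE i β)
  constructor
  · intro hirr
    refine ⟨n, by omega, fun x hx hx0 => ?_⟩
    have key : ∀ p : ℕ, (∀ i, 0 ≤ (FT S)^[p] x i) ∧
        ((∀ i, 0 < (FT S)^[p] x i) ∨
          p + 1 ≤ (Finset.univ.filter fun i => 0 < (FT S)^[p] x i).card) := by
      intro p
      induction p with
      | zero =>
        refine ⟨hx, Or.inr ?_⟩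
        obtain ⟨i, hi⟩ := Function.ne_iff.1 hx0
        exact Finset.card_pos.2 ⟨i, Finset.mem_filter.2 ⟨Finset.mem_univ _, lt_of_le_of_ne (hx i) (Ne.symm hi)⟩⟩
      | succ p ih =>
        obtain ⟨h1, h2⟩ := ih
        simp only [Function.iterate_succ_apply']
        generalize (FT S)^[p] x = y at h1 h2 ⊢
        refine ⟨fun i => FT_nonneg_aux hS h1 i, ?_⟩
        have mono : ∀ i, 0 < y i → 0 < FT S y i := fun i hi =>
          (FT_pos_iff_aux hk hS h1 i).2 ⟨fun _ => i,
            add_pos_of_nonneg_of_pos (hT _ _) (by simp [idT]), fun _ => hi⟩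
        rcases h2 with h2 | h2
        · exact Or.inl fun i => mono i (h2 i)
        by_cases hall : ∀ i, 0 < y i
        · exact Or.inl fun i => mono i (hall i)
        right
        push Not at hall
        obtain ⟨j, hj⟩ := hall
        have hex : ∃ i, ¬ 0 < y i ∧ 0 < FT S y i := by
          by_contra! hc
          apply hirr
          obtain ⟨a, ha⟩ := Finset.card_pos.1 (by omega : 0 < (Finset.univ.filter fun i => 0 < y i).card)
          refine ⟨Finset.univ.filter fun i => ¬ 0 < y i, ⟨j, by simpa using hj⟩, ?_, ?_⟩
          · intro h
            have := h ▸ Finset.mem_univ a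
            simp at this ha
            linarith
          · intro i hi β hb
            simp only [Finset.mem_filter, Finset.mem_univ, true_and, not_not] at hi hb
            by_contra hne
            have hpos : 0 < FT S y i := (FT_pos_iff_aux hk hS h1 i).2 ⟨β,
              add_pos_of_pos_of_nonneg (lt_of_le_of_ne (hT _ _) (Ne.symm hne)) (hE _ _), hb⟩
            exact absurd hpos (not_lt.2 (hc i (not_lt.1 hi)))
        obtain ⟨i, hi1, hi2⟩ := hex
        have : (Finset.univ.filter fun i => 0 < y i).card <
            (Finset.univ.filter fun i => 0 < FT S y i).card := by
          apply Finset.card_lt_card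
          rw [Finset.ssubset_iff_of_subset]
          · exact ⟨i, by simpa using hi2, by simpa using hi1⟩
          · intro a ha
            simp only [Finset.mem_filter, Finset.mem_univ, true_and] at ha ⊢
            exact mono a ha
        omega
    rcases (key n).2 with h | h
    · exact h
    · have := Finset.card_le_univ (Finset.univ.filter fun i => 0 < (FT S)^[n] x i)
      simp only [Fintype.card_fin] at this
      omega
  · rintro ⟨p, -, hp⟩ ⟨I, ⟨a, ha⟩, hI, hred⟩
    obtain ⟨b, hb⟩ : ∃ b, b ∉ I := by
      by_contra! h
      exact hI (Finset.eq_univ_iff_forall.2 h)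
    let x : Fin n → ℝ := fun i => if i ∈ I then 0 else 1
    have hx : ∀ i, 0 ≤ x i := by
      intro i
      simp only [x]
      split_ifs <;> norm_num
    have hx0 : x ≠ 0 := Function.ne_iff.2 ⟨b, by simp [x, hb]⟩
    have key : ∀ q : ℕ, (∀ i, 0 ≤ (FT S)^[q] x i) ∧ ∀ i ∈ I, ¬ 0 < (FT S)^[q] x i := by
      intro q
      induction q with
      | zero => exact ⟨hx, fun i hi => by simp [x, hi]⟩
      | succ q ih =>
        obtain ⟨h1, h2⟩ := ih
        simp only [Function.iterate_succ_apply']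
        refine ⟨fun i => FT_nonneg_aux hS h1 i, fun i hi hpos => ?_⟩
        obtain ⟨β, hβ, hl⟩ := (FT_pos_iff_aux hk hS h1 i).1 hpos
        have hnot : ∀ l, β l ∉ I := fun l hmem => h2 _ hmem (hl l)
        have hne : ¬ ∀ l, β l = i := fun h =>
          hnot ⟨0, by omega⟩ (by rw [h]; exact hi)
        simp [hSdef, hred i hi β hnot, idT, hne] at hβ
    exact (key p).2 a ha (hp x hx hx0 a)
end

section
/- Let T be a nonnegative tensor of order m ≥ 2 and dimension n ≥ 2 and let E be the identity tensor of the same order and dimension. Then T is weakly positive if and only if T + E is essentially positive. -/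
open Finset

theorem weakly_positive_iff_add_id_essentially_positive
    (m n : ℕ) (hm : 2 ≤ m) (hn : 2 ≤ n)
    (T : Fin n → (Fin (m - 1) → Fin n) → ℝ) (hT : TNonneg T) :
    TWeaklyPositive T ↔
      TEssentiallyPositive (fun i β => T i β + idT (Fin n) (m - 1) i β) := by
  have hk : 0 < m - 1 := by omega
  have hE : ∀ i β, 0 ≤ idT (Fin n) (m - 1) i β := by
    intro i β
    unfold idT
    split_ifs <;> norm_num
  constructor
  · intro hW x hx hx0 i
    obtain ⟨j, hj⟩ := Function.ne_iff.mp hx0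
    have hj' : 0 < x j := lt_of_le_of_ne (hx j) (Ne.symm hj)
    unfold tapp
    refine Finset.sum_pos' (fun β _ => mul_nonneg (add_nonneg (hT i β) (hE i β))
      (Finset.prod_nonneg fun l _ => hx _)) ⟨fun _ => j, Finset.mem_univ _, ?_⟩
    refine mul_pos ?_ (Finset.prod_pos fun l _ => hj')
    by_cases hij : i = j
    · subst hij
      have h1 : idT (Fin n) (m - 1) i (fun _ => i) = 1 := by simp [idT]
      beta_reduce
      rw [h1]
      linarith [hT i (fun _ => i)]
    · exact add_pos_of_pos_of_nonneg (hW i j hij) (hE _ _)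
  · intro hP i j hij
    have h := hP (Pi.single j 1) (fun l => by
      by_cases hl : l = j
      · subst hl; simp
      · simp [hl]) (by simp) i
    unfold tapp at h
    rw [Finset.sum_eq_single (fun _ => j)] at h
    · have h0 : idT (Fin n) (m - 1) i (fun _ => j) = 0 := by
        unfold idT
        rw [if_neg]
        intro hall
        exact hij (hall ⟨0, hk⟩).symm
      simpa [h0] using h
    · intro β _ hβ
      obtain ⟨l, hl⟩ := Function.ne_iff.mp hβ
      rw [Finset.prod_eq_zero (Finset.mem_univ l), mul_zero]
      simp [hl]
    · intro hh
      exact absurd (Finset.mem_univ _) hh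
end

section
/- A nonnegative tensor T of order m ≥ 2 and dimension n ≥ 2 is essentially positive if and only if T is weakly positive and all of its diagonal entries T_{i i … i} are positive. -/
open Finset

theorem essentially_positive_iff_weakly_positive_and_diag_pos
    (m n : ℕ) (hm : 2 ≤ m) (hn : 2 ≤ n)
    (T : Fin n → (Fin (m - 1) → Fin n) → ℝ) (hT : TNonneg T) :
    TEssentiallyPositive T ↔
      TWeaklyPositive T ∧ ∀ i, 0 < T i (fun _ => i) := by
  have key : ∀ i j, TEssentiallyPositive T → 0 < T i (fun _ => j) := by
    intro i j h
    have h1 := h (Pi.single j 1) (fun a => by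
      by_cases ha : a = j
      · subst ha; simp
      · simp [ha]) (by
        intro h0
        have := congrFun h0 j
        simp at this) i
    unfold tapp at h1
    rw [Finset.sum_eq_single (fun _ => j)] at h1
    · simpa using h1
    · intro β _ hβ
      obtain ⟨l, hl⟩ := Function.ne_iff.mp hβ
      rw [Finset.prod_eq_zero (Finset.mem_univ l) (by simp [hl]), mul_zero]
    · simp
  constructor
  · intro h
    exact ⟨fun i j _ => key i j h, fun i => key i i h⟩
  · rintro ⟨hw, hd⟩ x hx hx0 i
    obtain ⟨j, hj⟩ := Function.ne_iff.mp hx0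
    have hj' : 0 < x j := lt_of_le_of_ne (hx j) (Ne.symm hj)
    have hp : 0 < T i (fun _ => j) := by
      by_cases hij : i = j
      · subst hij; exact hd i
      · exact hw i j hij
    unfold tapp
    refine Finset.sum_pos' (fun β _ => mul_nonneg (hT i β) (Finset.prod_nonneg fun l _ => hx _))
      ⟨fun _ => j, Finset.mem_univ _, mul_pos hp (Finset.prod_pos fun _ _ => hj')⟩
end

section
/- Let T be a nonnegative tensor of order m ≥ 2 and dimension n ≥ 2. If T is a primitive tensor, then its representation matrix G(T) is a primitive matrix; in particular, every primitive nonnegative tensor is weakly primitive. -/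
open Finset

theorem repMat_nonneg_aux {n k : ℕ} (T : Fin n → (Fin k → Fin n) → ℝ) (hT : TNonneg T)
    (i j : Fin n) : 0 ≤ repMat T i j := by
  unfold repMat
  refine Finset.sum_nonneg fun β _ => ?_
  split_ifs
  · exact hT i β
  · exact le_rfl

theorem repMat_pow_nonneg_aux {n k : ℕ} (T : Fin n → (Fin k → Fin n) → ℝ) (hT : TNonneg T)
    (q : ℕ) : ∀ i j : Fin n, 0 ≤ (repMat T ^ q) i j := by
  induction q with
  | zero =>
    intro i j
    rw [pow_zero, Matrix.one_apply]
    split_ifs <;> norm_num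
  | succ q ih =>
    intro i j
    rw [pow_succ', Matrix.mul_apply]
    exact Finset.sum_nonneg fun l _ => mul_nonneg (repMat_nonneg_aux T hT i l) (ih l j)

theorem FT_iter_aux {n k : ℕ} (hk : 0 < k) (T : Fin n → (Fin k → Fin n) → ℝ) (hT : TNonneg T)
    (j : Fin n) (q : ℕ) :
    ∀ i : Fin n, (FT T)^[q] (Pi.single j 1) i ≠ 0 → 0 < (repMat T ^ q) i j := by
  induction q with
  | zero =>
    intro i hi
    have hij : i = j := by
      by_contra h
      exact hi (by simp [h])
    subst hij
    simp
  | succ q ih =>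
    intro i hi
    rw [Function.iterate_succ_apply'] at hi
    have h1 : tapp T ((FT T)^[q] (Pi.single j 1)) i ≠ 0 := by
      intro h0
      apply hi
      unfold FT
      unfold FT at h0
      rw [h0]
      exact Real.zero_rpow (inv_ne_zero (by exact_mod_cast hk.ne'))
    obtain ⟨β, -, hβ⟩ := Finset.exists_ne_zero_of_sum_ne_zero h1
    have hTβ : 0 < T i β := lt_of_le_of_ne (hT i β) (left_ne_zero_of_mul hβ).symm
    have hx := Finset.prod_ne_zero_iff.mp (right_ne_zero_of_mul hβ) ⟨0, hk⟩ (Finset.mem_univ _)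
    have h2 := ih _ hx
    have h3 : 0 < repMat T i (β ⟨0, hk⟩) := by
      unfold repMat
      refine Finset.sum_pos' (fun γ _ => ?_) ⟨β, Finset.mem_univ _, ?_⟩
      · split_ifs
        · exact hT i γ
        · exact le_rfl
      · rw [if_pos ⟨_, rfl⟩]
        exact hTβ
    rw [pow_succ', Matrix.mul_apply]
    exact Finset.sum_pos' (fun l _ => mul_nonneg (repMat_nonneg_aux T hT i l)
      (repMat_pow_nonneg_aux T hT q l j)) ⟨_, Finset.mem_univ _, mul_pos h3 h2⟩

theorem tensor_primitive_imp_representation_primitive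
    (m n : ℕ) (hm : 2 ≤ m) (hn : 2 ≤ n)
    (T : Fin n → (Fin (m - 1) → Fin n) → ℝ) (hT : TNonneg T)
    (hP : TPrimitive T) :
    MatPrimitive (repMat T) := by
  obtain ⟨p, hp, h⟩ := hP
  refine ⟨p, hp, fun i j => ?_⟩
  apply FT_iter_aux (by omega) T hT j p i
  refine (h (Pi.single j 1) (fun l => ?_) ?_ i).ne'
  · rw [Pi.single_apply]
    split_ifs <;> norm_num
  · intro h0
    have := congrFun h0 j
    simp at this
end

section
/- Every irreducible nonnegative tensor of order m ≥ 2 and dimension n ≥ 2 is weakly irreducible. -/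
open Finset

theorem irreducible_imp_weakly_irreducible
    (m n : ℕ) (hm : 2 ≤ m) (hn : 2 ≤ n)
    (T : Fin n → (Fin (m - 1) → Fin n) → ℝ) (hT : TNonneg T)
    (hirr : ¬ TReducible T) :
    MatIrreducible (repMat T) := by
  rintro ⟨I, hne, hI, h⟩
  refine hirr ⟨I, hne, hI, fun i hi β hβ => ?_⟩
  have l : Fin (m - 1) := ⟨0, by omega⟩
  have h0 := h i hi (β l) (hβ l)
  unfold repMat at h0
  rw [Finset.sum_eq_zero_iff_of_nonneg] at h0
  · have h1 := h0 β (Finset.mem_univ _)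
    rwa [if_pos ⟨l, rfl⟩] at h1
  · intro γ _
    split_ifs
    · exact hT i γ
    · exact le_rfl
end

section
/- Let T be a weakly irreducible nonnegative tensor of order m ≥ 2 and dimension n ≥ 2, and let (λ*, x*) be its unique positive eigenpair (x* has all components positive, (T (x*)^{m-1})_i = λ* (x*)_i^{m-1} for all i, and Σ_i (x*)_i = 1). Then for every vector x with all components positive, min_{1≤i≤n} (T x^{m-1})_i / x_i^{m-1} ≤ λ* ≤ max_{1≤i≤n} (T x^{m-1})_i / x_i^{m-1}; consequently the minimum over positive x of max_i (T x^{m-1})_i / x_i^{m-1} and the maximum over positive x of min_i (T x^{m-1})_i / x_i^{m-1} both exist and both equal λ*. -/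
open Finset

theorem tapp_mono_aux {ι : Type*} [Fintype ι] {k : ℕ} (T : ι → (Fin k → ι) → ℝ) (hT : TNonneg T)
    (x y : ι → ℝ) (hx : ∀ i, 0 ≤ x i) (hxy : ∀ i, x i ≤ y i) (i : ι) :
    tapp T x i ≤ tapp T y i := by
  unfold tapp
  refine Finset.sum_le_sum fun β _ => mul_le_mul_of_nonneg_left ?_ (hT i β)
  exact Finset.prod_le_prod (fun l _ => hx _) (fun l _ => hxy _)

theorem tapp_smul_aux {ι : Type*} [Fintype ι] {k : ℕ} (T : ι → (Fin k → ι) → ℝ)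
    (x : ι → ℝ) (c : ℝ) (i : ι) :
    tapp T (fun j => c * x j) i = c ^ k * tapp T x i := by
  unfold tapp
  rw [Finset.mul_sum]
  refine Finset.sum_congr rfl fun β _ => ?_
  rw [Finset.prod_mul_distrib]
  simp
  ring

theorem exists_le_aux {ι : Type*} [Fintype ι] [Nonempty ι] {k : ℕ} (T : ι → (Fin k → ι) → ℝ)
    (hT : TNonneg T) (lam : ℝ) (xs : ι → ℝ) (hxs : ∀ i, 0 < xs i)
    (heig : ∀ i, tapp T xs i = lam * xs i ^ k) (x : ι → ℝ) (hx : ∀ i, 0 < x i) :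
    (∃ i, tapp T x i / x i ^ k ≤ lam) ∧ ∃ i, lam ≤ tapp T x i / x i ^ k := by
  constructor
  · obtain ⟨i, hi⟩ := Finite.exists_max (fun i => x i / xs i)
    refine ⟨i, ?_⟩
    rw [div_le_iff₀ (pow_pos (hx i) k)]
    have h := tapp_mono_aux T hT x (fun j => (x i / xs i) * xs j) (fun j => (hx j).le)
      (fun j => (div_le_iff₀ (hxs j)).1 (hi j)) i
    rw [tapp_smul_aux, heig, mul_left_comm, ← mul_pow, div_mul_cancel₀ _ (hxs i).ne'] at h
    exact h
  · obtain ⟨i, hi⟩ := Finite.exists_min (fun i => x i / xs i)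
    refine ⟨i, ?_⟩
    rw [le_div_iff₀ (pow_pos (hx i) k)]
    have h := tapp_mono_aux T hT (fun j => (x i / xs i) * xs j) x
      (fun j => (mul_pos (div_pos (hx i) (hxs i)) (hxs j)).le)
      (fun j => (le_div_iff₀ (hxs j)).1 (hi j)) i
    rw [tapp_smul_aux, heig, mul_left_comm, ← mul_pow, div_mul_cancel₀ _ (hxs i).ne'] at h
    exact h

theorem collatz_wielandt_minimax
    (m n : ℕ) (hm : 2 ≤ m) (hn : 2 ≤ n)
    (T : Fin n → (Fin (m - 1) → Fin n) → ℝ) (hT : TNonneg T)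
    (hwi : MatIrreducible (repMat T))
    (lam : ℝ) (xs : Fin n → ℝ) (hxs : ∀ i, 0 < xs i)
    (heig : ∀ i, tapp T xs i = lam * xs i ^ (m - 1))
    (hsum : ∑ i, xs i = 1) :
    (∀ x : Fin n → ℝ, (∀ i, 0 < x i) →
        (Finset.univ : Finset (Fin n)).inf' ⟨⟨0, by omega⟩, Finset.mem_univ _⟩
            (fun i => tapp T x i / x i ^ (m - 1)) ≤ lam ∧
        lam ≤ (Finset.univ : Finset (Fin n)).sup' ⟨⟨0, by omega⟩, Finset.mem_univ _⟩
            (fun i => tapp T x i / x i ^ (m - 1))) ∧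
    IsLeast {r : ℝ | ∃ x : Fin n → ℝ, (∀ i, 0 < x i) ∧
        r = (Finset.univ : Finset (Fin n)).sup' ⟨⟨0, by omega⟩, Finset.mem_univ _⟩
            (fun i => tapp T x i / x i ^ (m - 1))} lam ∧
    IsGreatest {r : ℝ | ∃ x : Fin n → ℝ, (∀ i, 0 < x i) ∧
        r = (Finset.univ : Finset (Fin n)).inf' ⟨⟨0, by omega⟩, Finset.mem_univ _⟩
            (fun i => tapp T x i / x i ^ (m - 1))} lam := by
  have : Nonempty (Fin n) := ⟨⟨0, by omega⟩⟩
  have key : ∀ x : Fin n → ℝ, (∀ i, 0 < x i) →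
        (Finset.univ : Finset (Fin n)).inf' ⟨⟨0, by omega⟩, Finset.mem_univ _⟩
            (fun i => tapp T x i / x i ^ (m - 1)) ≤ lam ∧
        lam ≤ (Finset.univ : Finset (Fin n)).sup' ⟨⟨0, by omega⟩, Finset.mem_univ _⟩
            (fun i => tapp T x i / x i ^ (m - 1)) := by
    intro x hx
    obtain ⟨⟨i, hi⟩, ⟨j, hj⟩⟩ := exists_le_aux T hT lam xs hxs heig x hx
    exact ⟨(Finset.inf'_le _ (Finset.mem_univ i)).trans hi,
      hj.trans (Finset.le_sup' (fun i => tapp T x i / x i ^ (m - 1)) (Finset.mem_univ j))⟩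
  have hq : (fun i => tapp T xs i / xs i ^ (m - 1)) = fun _ => lam := by
    funext i
    rw [heig, mul_div_cancel_right₀ _ (pow_pos (hxs i) _).ne']
  refine ⟨key, ⟨⟨xs, hxs, ?_⟩, ?_⟩, ⟨⟨xs, hxs, ?_⟩, ?_⟩⟩
  · rw [hq]; exact (Finset.sup'_const _ _).symm
  · rintro r ⟨x, hx, rfl⟩
    exact (key x hx).2
  · rw [hq]; exact (Finset.inf'_const _ _).symm
  · rintro r ⟨x, hx, rfl⟩
    exact (key x hx).1
end

section
/- Let T be a weakly irreducible nonnegative tensor of order m ≥ 2 and dimension n ≥ 2, and let (λ*, x*) be a positive eigenpair of T (x* has all components positive and (T (x*)^{m-1})_i = λ* (x*)_i^{m-1} for all i). Then every eigenvalue ν ∈ ℂ of T (i.e., every ν for which there is v ∈ ℂ^n \ {0} with (T v^{m-1})_i = ν v_i^{m-1} for all i) satisfies |ν| ≤ λ*; in particular ρ(T) = λ*. -/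
open Finset

theorem positive_eigenvalue_dominates
    (m n : ℕ) (hm : 2 ≤ m) (hn : 2 ≤ n)
    (T : Fin n → (Fin (m - 1) → Fin n) → ℝ) (hT : TNonneg T)
    (hwi : MatIrreducible (repMat T))
    (lam : ℝ) (xs : Fin n → ℝ) (hxs : ∀ i, 0 < xs i)
    (heig : ∀ i, tapp T xs i = lam * xs i ^ (m - 1)) :
    (∀ nu : ℂ, TIsEig T nu → ‖nu‖ ≤ lam) ∧ specRad T = lam := by
  have h1 : ∀ nu : ℂ, TIsEig T nu → ‖nu‖ ≤ lam := by
    rintro nu ⟨v, hv, hev⟩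
    have : Nonempty (Fin n) := ⟨⟨0, by omega⟩⟩
    obtain ⟨i, hi⟩ := Finite.exists_max (fun i => ‖v i‖ / xs i)
    set c := ‖v i‖ / xs i with hc
    have hle : ∀ j, ‖v j‖ ≤ c * xs j := fun j => (div_le_iff₀ (hxs j)).1 (hi j)
    have hci : c * xs i = ‖v i‖ := div_mul_cancel₀ _ (hxs i).ne'
    have hpos : 0 < ‖v i‖ := by
      obtain ⟨j, hj⟩ := Function.ne_iff.1 hv
      have h2 : 0 < ‖v j‖ := norm_pos_iff.2 hj
      have h3 : 0 < c := pos_of_mul_pos_left (h2.trans_le (hle j)) (hxs j).le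
      rw [← hci]
      exact mul_pos h3 (hxs i)
    have key : ‖nu‖ * ‖v i‖ ^ (m - 1) ≤ lam * ‖v i‖ ^ (m - 1) := by
      calc ‖nu‖ * ‖v i‖ ^ (m - 1) = ‖nu * v i ^ (m - 1)‖ := by rw [norm_mul, norm_pow]
        _ = ‖∑ β : Fin (m - 1) → Fin n, (T i β : ℂ) * ∏ l, v (β l)‖ := by rw [hev i]
        _ ≤ ∑ β : Fin (m - 1) → Fin n, ‖(T i β : ℂ) * ∏ l, v (β l)‖ := norm_sum_le _ _
        _ ≤ ∑ β : Fin (m - 1) → Fin n, c ^ (m - 1) * (T i β * ∏ l, xs (β l)) := by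
          refine Finset.sum_le_sum fun β _ => ?_
          rw [norm_mul, norm_prod, Complex.norm_real, Real.norm_of_nonneg (hT i β)]
          have h4 : ∏ l, ‖v (β l)‖ ≤ ∏ l, (c * xs (β l)) :=
            Finset.prod_le_prod (fun _ _ => norm_nonneg _) fun l _ => hle (β l)
          rw [Finset.prod_mul_distrib, Finset.prod_const, Finset.card_univ,
            Fintype.card_fin] at h4
          calc T i β * ∏ l, ‖v (β l)‖ ≤ T i β * (c ^ (m - 1) * ∏ l, xs (β l)) :=
                mul_le_mul_of_nonneg_left h4 (hT i β)
            _ = _ := by ring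
        _ = c ^ (m - 1) * tapp T xs i := by rw [← Finset.mul_sum]; rfl
        _ = lam * (c * xs i) ^ (m - 1) := by rw [heig i, mul_pow]; ring
        _ = lam * ‖v i‖ ^ (m - 1) := by rw [hci]
    exact le_of_mul_le_mul_right key (pow_pos hpos _)
  refine ⟨h1, ?_⟩
  have i0 : Fin n := ⟨0, by omega⟩
  have hlam : 0 ≤ lam := by
    have h5 : 0 ≤ tapp T xs i0 :=
      Finset.sum_nonneg fun β _ => mul_nonneg (hT _ _) (Finset.prod_nonneg fun l _ => (hxs _).le)
    rw [heig] at h5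
    exact nonneg_of_mul_nonneg_left h5 (pow_pos (hxs i0) _)
  have hg : IsGreatest {r : ℝ | ∃ lam : ℂ, TIsEig T lam ∧ r = ‖lam‖} lam := by
    constructor
    · refine ⟨(lam : ℂ), ⟨fun i => (xs i : ℂ), ?_, ?_⟩, ?_⟩
      · intro h
        have h6 := congrFun h i0
        exact (hxs i0).ne' (by simpa using h6)
      · intro i
        have h7 := heig i
        unfold tapp at h7
        beta_reduce
        exact_mod_cast congrArg (fun r : ℝ => (r : ℂ)) h7
      · rw [Complex.norm_real, Real.norm_of_nonneg hlam]
    · rintro r ⟨nu, hnu, rfl⟩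
      exact h1 nu hnu
  exact hg.csSup_eq
end
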